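/- Let K be an algebraically closed field and Δ a simplicial complex on X = {x_1,...,x_n} such that I_Δ is a set-theoretic complete intersection. If F is a subfacet of Δ and Δ' = Δ ∪ co_{x_0}F, then I_{Δ'} is also a set-theoretic complete intersection. -/

import Mathlib

open MvPolynomial

section Core

variable {V : Type*} [DecidableEq V]

/-- `Δ` is a simplicial complex on the vertex set `V`: every singleton is a face
and faces are closed under taking subsets. -/
def IsSimplicialComplex (Δ : Set (Finset V)) : Prop :=
  (∀ v : V, ({v} : Finset V) ∈ Δ) ∧ ∀ F ∈ Δ, ∀ G ⊆ F, G ∈ Δ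

/-- The Stanley-Reisner ideal of `Δ` over `K`: generated by the squarefree monomials
whose support is not a face of `Δ`. -/
noncomputable def srIdeal (K : Type*) [Field K] (Δ : Set (Finset V)) :
    Ideal (MvPolynomial V K) :=
  Ideal.span ((fun S : Finset V => ∏ v ∈ S, (X v : MvPolynomial V K)) '' {S | S ∉ Δ})

/-- The simplicial complex `Δ ∪ co_{x₀} F` on the vertex set `V ∪ {x₀}`,
realized as `Option V` with `none` playing the role of the new vertex `x₀`. -/
def coneUnion (Δ : Set (Finset V)) (F : Finset V) : Set (Finset (Option V)) :=
  ((fun G : Finset V => G.map Function.Embedding.some) '' Δ) ∪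
    {G : Finset (Option V) | G ⊆ insert none (F.map Function.Embedding.some)}

/-- A facet is a maximal face. -/
def IsFacet (Δ : Set (Finset V)) (F : Finset V) : Prop :=
  F ∈ Δ ∧ ∀ G ∈ Δ, F ⊆ G → F = G

/-- The prime ideal `P_F` generated by the variables not in `F`. -/
noncomputable def facePrime (K : Type*) [Field K] (F : Finset V) :
    Ideal (MvPolynomial V K) :=
  Ideal.span ((fun v : V => (X v : MvPolynomial V K)) '' {v : V | v ∉ F})

/-- The dimension of a simplicial complex. -/
noncomputable def scDim (Δ : Set (Finset V)) : ℕ := sSup (Finset.card '' Δ) - 1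

/-- A subfacet of a (pure) complex: a face whose cardinality equals the dimension. -/
noncomputable def IsSubfacet (Δ : Set (Finset V)) (F : Finset V) : Prop :=
  F ∈ Δ ∧ F.card = scDim Δ

end Core

/-- The arithmetical rank of an ideal: the least number of elements generating it
up to radical. -/
noncomputable def ara {R : Type*} [CommRing R] (I : Ideal R) : ℕ :=
  sInf {s : ℕ | ∃ a : Fin s → R, (Ideal.span (Set.range a)).radical = I.radical}

/-- The height of an ideal: the infimum of the heights of the primes containing it. -/
noncomputable def idealHeight {R : Type*} [CommRing R] (I : Ideal R) : ℕ∞ :=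
  ⨅ p : {p : PrimeSpectrum R // I ≤ p.asIdeal}, Order.height p.1

/-!
A prime `p` contains `I_Δ` exactly when it contains `P_G` for some face `G`. Hence `ht I_Δ` is the
least codimension of a face and, by Krull's height theorem, every facet of a set-theoretic complete
intersection has that codimension. In particular the subfacet `F` lies in a facet `F ∪ {w}`, whose
codimension is `h = ara I_Δ`, and `I_Δ'` has height `h + 1`.

It remains to cut out `V(I_Δ') = (V(x₀) ∩ V(I_Δ)) ∪ V(P_F)` by `h + 1` equations. Let `a₁, …, a_h`
cut out `V(I_Δ)` and let `y` be the vector of the `h` variables outside `F ∪ {w}`. As `I_Δ` lies in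
the prime `(y)`, one can write `a = C y` for a square matrix `C`. For `M = x₀ + diag(a) C`, the `h`
entries of `M y = x₀ y + a²` and the element `x₀ʰ - det M + w x₀ det M` do the job: where `x₀ = 0`
they give `a = 0`, and where `x₀ ≠ 0` they force `det M ≠ 0`, hence `y = 0`, so `a = 0`,
`det M = x₀ʰ`, and finally `w = 0`.
-/

/-- The ideal `I` is a set-theoretic complete intersection: it is cut out up to radical by as many
elements as its height. -/
def IsSetTheoreticCI {R : Type*} [CommRing R] (I : Ideal R) : Prop :=
  (ara I : ℕ∞) = idealHeight I

section ArithmeticalRank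

variable {R : Type*} [CommRing R] {I J : Ideal R}

theorem radical_eq_radical_iff_forall_isPrime :
    I.radical = J.radical ↔ ∀ p : Ideal R, p.IsPrime → (I ≤ p ↔ J ≤ p) := by
  rw [← PrimeSpectrum.zeroLocus_eq_iff, Set.ext_iff]
  exact ⟨fun h p hp => h ⟨p, hp⟩, fun h p => h p.asIdeal p.isPrime⟩

theorem span_range_le_iff {ι : Type*} {a : ι → R} :
    Ideal.span (Set.range a) ≤ I ↔ ∀ i, a i ∈ I := by
  rw [Ideal.span_le, Set.range_subset_iff]
  rfl

theorem span_insert_range_le_iff {ι : Type*} {x : R} {a : ι → R} :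
    Ideal.span (insert x (Set.range a)) ≤ I ↔ x ∈ I ∧ ∀ i, a i ∈ I := by
  rw [Ideal.span_le, Set.insert_subset_iff, Set.range_subset_iff]
  rfl

theorem ara_eq_of_radical_eq (h : I.radical = J.radical) : ara I = ara J := by
  rw [ara, ara, h]

theorem ara_le_card {ι : Type*} [Fintype ι] {a : ι → R}
    (ha : (Ideal.span (Set.range a)).radical = I.radical) : ara I ≤ Fintype.card ι := by
  refine Nat.sInf_le ⟨a ∘ (Fintype.equivFin ι).symm, ?_⟩
  rwa [EquivLike.range_comp]

theorem ara_bot : ara (⊥ : Ideal R) = 0 :=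
  Nat.le_zero.mp (ara_le_card (a := Fin.elim0) (by simp))

variable [IsNoetherianRing R]

theorem exists_radical_span_range_eq {ι : Type*} [Fintype ι] (hι : Fintype.card ι = ara I) :
    ∃ a : ι → R, (Ideal.span (Set.range a)).radical = I.radical := by
  have exists_generators : {s : ℕ | ∃ a : Fin s → R,
      (Ideal.span (Set.range a)).radical = I.radical}.Nonempty := by
    obtain ⟨s, a, ha⟩ := Submodule.fg_iff_exists_fin_generating_family.mp
      (IsNoetherian.noetherian I)
    exact ⟨s, a, congrArg Ideal.radical ha⟩
  obtain ⟨a, ha⟩ : ∃ a : Fin (ara I) → R, (Ideal.span (Set.range a)).radical = I.radical :=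
    Nat.sInf_mem exists_generators
  refine ⟨a ∘ Fintype.equivFinOfCardEq hι, ?_⟩
  rwa [EquivLike.range_comp]

theorem height_le_ara_of_mem_minimalPrimes {p : Ideal R} (hp : p ∈ I.minimalPrimes) :
    p.height ≤ ara I := by
  obtain ⟨a, ha⟩ := exists_radical_span_range_eq (I := I) (Fintype.card_fin _)
  rw [← Ideal.radical_minimalPrimes, ← ha, Ideal.radical_minimalPrimes] at hp
  calc p.height ≤ (Set.range a).ncard :=
        Ideal.height_le_card_of_mem_minimalPrimes_span (Set.finite_range a) hp
    _ ≤ ara I := by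
        have card_le := Finite.card_range_le a
        rw [Nat.card_fin, Nat.card_coe_set_eq] at card_le
        exact_mod_cast card_le

end ArithmeticalRank

section Height

variable {R : Type*} [CommRing R] {I : Ideal R}

theorem idealHeight_eq_height (I : Ideal R) : idealHeight I = I.height := by
  refine le_antisymm ?_ (le_iInf fun p => ?_)
  · rw [Ideal.height_eq_inf_minimalPrimes]
    refine le_iInf₂ fun p hp => ?_
    let P : PrimeSpectrum R := ⟨p, hp.1.1⟩
    calc idealHeight I ≤ Order.height P := iInf_le_of_le ⟨P, hp.1.2⟩ le_rfl
      _ = p.height := (PrimeSpectrum.height_eq_orderHeight P).symm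
  · rw [← PrimeSpectrum.height_eq_orderHeight]
    exact Ideal.height_mono p.2

theorem idealHeight_le_ara [IsNoetherianRing R] (hI : I ≠ ⊤) : idealHeight I ≤ ara I := by
  obtain ⟨p, hp⟩ := Ideal.nonempty_minimalPrimes hI
  rw [idealHeight_eq_height]
  exact (Ideal.height_mono hp.1.2).trans (height_le_ara_of_mem_minimalPrimes hp)

theorem isSetTheoreticCI_of_ara_le [IsNoetherianRing R] (hI : I ≠ ⊤)
    (h : (ara I : ℕ∞) ≤ idealHeight I) : IsSetTheoreticCI I :=
  le_antisymm h (idealHeight_le_ara hI)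

end Height

section DeterminantalTrick

open Matrix

variable {R ι : Type*} [CommRing R] [Fintype ι]

theorem exists_mulVec_eq_of_mem_span_range {a y : ι → R}
    (ha : ∀ i, a i ∈ Ideal.span (Set.range y)) : ∃ C : Matrix ι ι R, C *ᵥ y = a := by
  choose C hC using fun i => Ideal.mem_span_range_iff_exists_fun.mp (ha i)
  exact ⟨of C, funext hC⟩

section Equations

variable [DecidableEq ι]

/-- The matrix `x + diag(a) C` with `a = C y`, chosen so that it maps `y` to `x y + a²` and is the
scalar matrix `x` wherever `a` vanishes. -/
def determinantalMatrix (x : R) (y : ι → R) (C : Matrix ι ι R) : Matrix ι ι R :=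
  x • 1 + diagonal (C *ᵥ y) * C

/-- Equations for `(V(x) ∩ V(C y)) ∪ (V(y₀) ∩ V(y))`, one more than there are entries in `y`. -/
def determinantalEquations (x y₀ : R) (y : ι → R) (C : Matrix ι ι R) : Option ι → R
  | none => x ^ Fintype.card ι - (determinantalMatrix x y C).det
      + y₀ * x * (determinantalMatrix x y C).det
  | some i => (determinantalMatrix x y C *ᵥ y) i

theorem determinantalMatrix_mulVec (x : R) (y : ι → R) (C : Matrix ι ι R) :
    determinantalMatrix x y C *ᵥ y = x • y + (C *ᵥ y) ^ 2 := by
  ext i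
  simp [determinantalMatrix, add_mulVec, smul_mulVec, ← mulVec_mulVec, mulVec_diagonal, sq]

theorem det_determinantalMatrix_of_mulVec_eq_zero {x : R} {y : ι → R} {C : Matrix ι ι R}
    (h : C *ᵥ y = 0) : (determinantalMatrix x y C).det = x ^ Fintype.card ι := by
  simp [determinantalMatrix, h]

theorem map_determinantalMatrix {S : Type*} [CommRing S] (φ : R →+* S) (x : R) (y : ι → R)
    (C : Matrix ι ι R) :
    (determinantalMatrix x y C).map φ = determinantalMatrix (φ x) (φ ∘ y) (C.map φ) := by
  ext i j
  simp [determinantalMatrix, RingHom.map_mulVec, one_apply, apply_ite φ]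

theorem map_determinantalEquations {S : Type*} [CommRing S] (φ : R →+* S) (x y₀ : R) (y : ι → R)
    (C : Matrix ι ι R) (i : Option ι) :
    φ (determinantalEquations x y₀ y C i) =
      determinantalEquations (φ x) (φ y₀) (φ ∘ y) (C.map φ) i := by
  cases i <;>
    simp [determinantalEquations, RingHom.map_det, RingHom.map_mulVec, map_determinantalMatrix]

theorem determinantalEquations_eq_zero_iff [IsDomain R] {x y₀ : R} {y : ι → R}
    {C : Matrix ι ι R} :
    (∀ i, determinantalEquations x y₀ y C i = 0) ↔ (x = 0 ∧ C *ᵥ y = 0) ∨ (y₀ = 0 ∧ y = 0) := by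
  have forall_iff : (∀ i, determinantalEquations x y₀ y C i = 0) ↔
      x ^ Fintype.card ι - (determinantalMatrix x y C).det
        + y₀ * x * (determinantalMatrix x y C).det = 0 ∧ determinantalMatrix x y C *ᵥ y = 0 := by
    rw [Option.forall, funext_iff]
    rfl
  rw [forall_iff]
  constructor
  · rintro ⟨det_eq, mulVec_eq⟩
    by_cases hx : x = 0
    · rw [determinantalMatrix_mulVec, hx, zero_smul, zero_add] at mulVec_eq
      exact .inl ⟨hx, eq_zero_of_pow_eq_zero mulVec_eq⟩
    · have det_ne : (determinantalMatrix x y C).det ≠ 0 := fun h => by simp [h, hx] at det_eq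
      have hy : y = 0 := eq_zero_of_mulVec_eq_zero det_ne mulVec_eq
      rw [det_determinantalMatrix_of_mulVec_eq_zero (by rw [hy, mulVec_zero])] at det_eq
      exact .inr ⟨by simpa [hx] using det_eq, hy⟩
  · rintro (⟨rfl, hCy⟩ | ⟨rfl, rfl⟩)
    · simp [det_determinantalMatrix_of_mulVec_eq_zero, determinantalMatrix_mulVec, hCy]
    · simp [det_determinantalMatrix_of_mulVec_eq_zero]

theorem determinantalEquations_mem_iff {p : Ideal R} [p.IsPrime] {x y₀ : R} {y : ι → R}
    {C : Matrix ι ι R} :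
    (∀ i, determinantalEquations x y₀ y C i ∈ p) ↔
      (x ∈ p ∧ ∀ i, (C *ᵥ y) i ∈ p) ∨ (y₀ ∈ p ∧ ∀ i, y i ∈ p) := by
  simp only [← Ideal.Quotient.eq_zero_iff_mem, map_determinantalEquations,
    determinantalEquations_eq_zero_iff, funext_iff, RingHom.map_mulVec, Function.comp_apply,
    Pi.zero_apply]

end Equations

theorem ara_inf_le_card_add_one (x y₀ : R) {a y : ι → R}
    (ha : ∀ i, a i ∈ Ideal.span (Set.range y)) :
    ara (Ideal.span (insert x (Set.range a)) ⊓ Ideal.span (insert y₀ (Set.range y))) ≤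
      Fintype.card ι + 1 := by
  classical
  obtain ⟨C, rfl⟩ := exists_mulVec_eq_of_mem_span_range ha
  rw [← Fintype.card_option]
  refine ara_le_card (a := determinantalEquations x y₀ y C)
    (radical_eq_radical_iff_forall_isPrime.mpr fun p hp => ?_)
  rw [span_range_le_iff, determinantalEquations_mem_iff, hp.inf_le, span_insert_range_le_iff,
    span_insert_range_le_iff]

end DeterminantalTrick

section FacePrime

variable {V : Type*} {K : Type*} [Field K] {F G : Finset V}

theorem facePrime_le_iff {p : Ideal (MvPolynomial V K)} :
    facePrime K F ≤ p ↔ ∀ v ∉ F, X v ∈ p := by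
  rw [facePrime, Ideal.span_le, Set.image_subset_iff]
  rfl

theorem facePrime_eq_span_range (F : Finset V) :
    facePrime K F = Ideal.span (Set.range fun v : {v // v ∉ F} => X (v : V)) := by
  rw [facePrime, Set.image_eq_range]
  rfl

theorem facePrime_eq_ker_killCompl (F : Finset V) :
    facePrime K F = RingHom.ker (killCompl (R := K) (Subtype.val_injective (p := (· ∈ F)))) := by
  refine le_antisymm (facePrime_le_iff.mpr fun v hv => ?_) fun f hf => ?_
  · simp [RingHom.mem_ker, killCompl, hv]
  · have mk_rename_killCompl :
        ((Ideal.Quotient.mkₐ K (facePrime K F)).comp (rename Subtype.val)).comp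
          (killCompl (Subtype.val_injective (p := (· ∈ F)))) =
        Ideal.Quotient.mkₐ K (facePrime K F) := by
      refine algHom_ext fun v => ?_
      by_cases hv : v ∈ F
      · have killCompl_X := killCompl_rename_app (R := K) Subtype.val_injective
          (X (⟨v, hv⟩ : {v // v ∈ F}))
        rw [rename_X] at killCompl_X
        simp [killCompl_X]
      · have hX : X v ∈ facePrime K F := facePrime_le_iff.mp le_rfl v hv
        simpa [killCompl, hv] using (Ideal.Quotient.eq_zero_iff_mem.mpr hX).symm
    rw [← Ideal.Quotient.eq_zero_iff_mem, ← Ideal.Quotient.mkₐ_eq_mk K, ← mk_rename_killCompl,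
      AlgHom.comp_apply, RingHom.mem_ker.mp hf, map_zero]

instance facePrime_isPrime (F : Finset V) : (facePrime K F).IsPrime := by
  rw [facePrime_eq_ker_killCompl]
  exact RingHom.ker_isPrime _

theorem X_mem_facePrime_iff {v : V} : (X v : MvPolynomial V K) ∈ facePrime K F ↔ v ∉ F := by
  classical
  simp [facePrime, mem_ideal_span_X_image, support_X, Finsupp.single_apply]

theorem facePrime_le_facePrime_iff : facePrime K G ≤ facePrime K F ↔ F ⊆ G := by
  simp only [facePrime_le_iff, X_mem_facePrime_iff, not_imp_not]
  rfl

variable [Fintype V] [DecidableEq V]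

theorem card_notMem (F : Finset V) : Fintype.card {v // v ∉ F} = Fᶜ.card := by
  rw [Fintype.card_subtype_compl, Fintype.card_coe, Finset.card_compl]

theorem card_compl_le_height_facePrime (F : Finset V) :
    (Fᶜ.card : ℕ∞) ≤ (facePrime K F).height := by
  suffices card_le : ∀ T : Finset V, (T.card : ℕ∞) ≤ (facePrime K Tᶜ).height by
    simpa using card_le Fᶜ
  intro T
  induction T using Finset.induction_on with
  | empty => simp
  | insert v T hv ih =>
    have facePrime_lt : facePrime K Tᶜ < facePrime K (insert v T)ᶜ := by
      simp only [lt_iff_le_not_ge, facePrime_le_facePrime_iff, Finset.compl_subset_compl]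
      exact ⟨Finset.subset_insert v T, fun h => hv (h (Finset.mem_insert_self v T))⟩
    rw [Finset.card_insert_of_notMem hv]
    push_cast
    exact (add_le_add_left ih 1).trans (Ideal.height_add_one_le_of_lt_of_isPrime facePrime_lt)

theorem height_facePrime (F : Finset V) : (facePrime K F).height = Fᶜ.card := by
  refine le_antisymm ?_ (card_compl_le_height_facePrime F)
  have ara_le : ara (facePrime K F) ≤ Fᶜ.card := by
    rw [← card_notMem]
    exact ara_le_card (congrArg Ideal.radical (facePrime_eq_span_range F).symm)
  calc (facePrime K F).height ≤ ara (facePrime K F) :=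
        height_le_ara_of_mem_minimalPrimes (by simp [Ideal.minimalPrimes_eq_subsingleton_self])
    _ ≤ Fᶜ.card := by exact_mod_cast ara_le

end FacePrime

section StanleyReisner

variable {V : Type*} {K : Type*} [Field K] {Δ : Set (Finset V)} {F : Finset V}

theorem srIdeal_univ : srIdeal K (Set.univ : Set (Finset V)) = ⊥ := by
  simp [srIdeal]

theorem srIdeal_le_facePrime (hΔ : IsLowerSet Δ) (hF : F ∈ Δ) : srIdeal K Δ ≤ facePrime K F := by
  refine Ideal.span_le.mpr ?_
  rintro _ ⟨S, hS, rfl⟩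
  obtain ⟨v, hvS, hvF⟩ := Finset.not_subset.mp fun hSF : S ⊆ F => hS (hΔ hSF hF)
  exact Ideal.mem_of_dvd _ (Finset.dvd_prod_of_mem _ hvS) (X_mem_facePrime_iff.mpr hvF)

theorem srIdeal_ne_top (hΔ : IsLowerSet Δ) (hF : F ∈ Δ) : srIdeal K Δ ≠ ⊤ := fun h =>
  (facePrime_isPrime (K := K) F).ne_top (top_le_iff.mp (h ▸ srIdeal_le_facePrime hΔ hF))

theorem srIdeal_le_iff_exists_facePrime_le [Finite V] (hΔ : IsLowerSet Δ)
    {p : Ideal (MvPolynomial V K)} [p.IsPrime] : srIdeal K Δ ≤ p ↔ ∃ G ∈ Δ, facePrime K G ≤ p := by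
  classical
  have := Fintype.ofFinite V
  refine ⟨fun h => ?_, fun ⟨G, hG, hGp⟩ => (srIdeal_le_facePrime hΔ hG).trans hGp⟩
  let G : Finset V := {v | (X v : MvPolynomial V K) ∉ p}
  refine ⟨G, by_contra fun hG => ?_, facePrime_le_iff.mpr fun v hv => by simpa [G] using hv⟩
  obtain ⟨v, hvG, hvp⟩ := Ideal.IsPrime.prod_mem_iff.mp (h (Ideal.subset_span ⟨G, hG, rfl⟩))
  exact (Finset.mem_filter.mp hvG).2 hvp

theorem IsFacet.facePrime_mem_minimalPrimes [Finite V] (hΔ : IsLowerSet Δ) (hF : IsFacet Δ F) :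
    facePrime K F ∈ (srIdeal K Δ).minimalPrimes := by
  refine ⟨⟨facePrime_isPrime F, srIdeal_le_facePrime hΔ hF.1⟩, fun p ⟨hp, hle⟩ hpF => ?_⟩
  obtain ⟨G, hG, hGp⟩ := (srIdeal_le_iff_exists_facePrime_le hΔ).mp hle
  rwa [hF.2 G hG (facePrime_le_facePrime_iff.mp (hGp.trans hpF))]

theorem idealHeight_srIdeal [Fintype V] [DecidableEq V] (hΔ : IsLowerSet Δ) (hF : F ∈ Δ)
    (hmax : ∀ G ∈ Δ, G.card ≤ F.card) : idealHeight (srIdeal K Δ) = Fᶜ.card := by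
  rw [idealHeight_eq_height]
  refine le_antisymm ?_ ?_
  · exact (Ideal.height_mono (srIdeal_le_facePrime hΔ hF)).trans_eq (height_facePrime F)
  · rw [Ideal.height_eq_inf_minimalPrimes]
    refine le_iInf₂ fun p hp => ?_
    have := hp.1.1
    obtain ⟨G, hG, hGp⟩ := (srIdeal_le_iff_exists_facePrime_le hΔ).mp hp.1.2
    calc (Fᶜ.card : ℕ∞) ≤ Gᶜ.card := by
          rw [Finset.card_compl, Finset.card_compl]
          exact_mod_cast Nat.sub_le_sub_left (hmax G hG) _
      _ = (facePrime K G).height := (height_facePrime G).symm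
      _ ≤ p.height := Ideal.height_mono hGp

theorem IsFacet.card_le_of_isSetTheoreticCI [Finite V] (hΔ : IsLowerSet Δ)
    (hstci : IsSetTheoreticCI (srIdeal K Δ)) (hF : IsFacet Δ F) {G : Finset V} (hG : G ∈ Δ) :
    G.card ≤ F.card := by
  classical
  have := Fintype.ofFinite V
  obtain ⟨H, hH, hmax⟩ := Set.exists_max_image Δ Finset.card Δ.toFinite ⟨G, hG⟩
  have codim_le : Fᶜ.card ≤ Hᶜ.card := by
    rw [← Nat.cast_le (α := ℕ∞), ← idealHeight_srIdeal (K := K) hΔ hH hmax, ← hstci,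
      ← height_facePrime (K := K) F]
    exact height_le_ara_of_mem_minimalPrimes (hF.facePrime_mem_minimalPrimes hΔ)
  rw [Finset.card_compl, Finset.card_compl] at codim_le
  have := hmax G hG
  have := H.card_le_univ
  have := F.card_le_univ
  omega

end StanleyReisner

section Subfacet

variable {V : Type*} {Δ : Set (Finset V)} {F : Finset V}

theorem IsSimplicialComplex.isLowerSet (hΔ : IsSimplicialComplex Δ) : IsLowerSet Δ :=
  fun G _ hHG hG => hΔ.2 G hG _ hHG

theorem exists_insert_mem_of_not_isFacet [DecidableEq V] (hΔ : IsLowerSet Δ) (hF : F ∈ Δ)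
    (hfacet : ¬ IsFacet Δ F) : ∃ w ∉ F, insert w F ∈ Δ := by
  simp only [IsFacet, hF, true_and, not_forall] at hfacet
  obtain ⟨G, hG, hFG, hne⟩ := hfacet
  obtain ⟨w, hwG, hwF⟩ := Finset.exists_of_ssubset (hFG.ssubset_of_ne hne)
  exact ⟨w, hwF, hΔ (Finset.insert_subset hwG hFG) hG⟩

variable [Finite V]

theorem isGreatest_scDim_add_one [Nonempty V] (hΔ : IsSimplicialComplex Δ) :
    IsGreatest (Finset.card '' Δ) (scDim Δ + 1) := by
  obtain ⟨v⟩ := ‹Nonempty V›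
  have one_mem : 1 ∈ Finset.card '' Δ := ⟨{v}, hΔ.1 v, Finset.card_singleton v⟩
  have bddAbove : BddAbove (Finset.card '' Δ) := (Set.toFinite _).bddAbove
  rw [scDim, Nat.sub_add_cancel (le_csSup bddAbove one_mem)]
  exact ⟨Nat.sSup_mem ⟨1, one_mem⟩ bddAbove, fun _ => le_csSup bddAbove⟩

theorem IsSubfacet.exists_insert_mem [DecidableEq V] [Nonempty V] {K : Type*} [Field K]
    (hΔ : IsSimplicialComplex Δ) (hstci : IsSetTheoreticCI (srIdeal K Δ)) (hF : IsSubfacet Δ F) :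
    ∃ w ∉ F, insert w F ∈ Δ := by
  refine exists_insert_mem_of_not_isFacet hΔ.isLowerSet hF.1 fun hfacet => ?_
  obtain ⟨G, hG, hGcard⟩ := (isGreatest_scDim_add_one hΔ).1
  have := hfacet.card_le_of_isSetTheoreticCI hΔ.isLowerSet hstci hG
  rw [hF.2] at this
  omega

end Subfacet

section ConeUnion

variable {V : Type*} {K : Type*} [Field K] {Δ : Set (Finset V)} {F : Finset V}

theorem facePrime_map_some_le_iff {p : Ideal (MvPolynomial (Option V) K)} :
    facePrime K (F.map .some) ≤ p ↔ X none ∈ p ∧ facePrime K F ≤ p.comap (rename some) := by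
  simp [facePrime_le_iff, Option.forall]

variable [DecidableEq V]

theorem isLowerSet_coneUnion (hΔ : IsLowerSet Δ) (F : Finset V) : IsLowerSet (coneUnion Δ F) := by
  rintro _ H hHG (⟨G, hG, rfl⟩ | hGF)
  · obtain ⟨H, hHG', rfl⟩ := Finset.subset_map_iff.mp hHG
    exact .inl ⟨H, hΔ hHG' hG, rfl⟩
  · exact .inr (hHG.trans hGF)

theorem insert_none_map_some_mem_coneUnion (Δ : Set (Finset V)) (F : Finset V) :
    insert none (F.map .some) ∈ coneUnion Δ F :=
  .inr (Finset.Subset.refl _)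

theorem coneUnion_eq_univ_of_isEmpty [IsEmpty V] (Δ : Set (Finset V)) (F : Finset V) :
    coneUnion Δ F = Set.univ :=
  Set.eq_univ_of_forall fun G => .inr fun x _ => by simp [Subsingleton.elim x none]

theorem facePrime_insert_none_map_some_le_iff {p : Ideal (MvPolynomial (Option V) K)} :
    facePrime K (insert none (F.map .some)) ≤ p ↔ facePrime K F ≤ p.comap (rename some) := by
  simp [facePrime_le_iff, Option.forall]

theorem srIdeal_coneUnion_le_iff [Finite V] (hΔ : IsLowerSet Δ)
    {p : Ideal (MvPolynomial (Option V) K)} [p.IsPrime] :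
    srIdeal K (coneUnion Δ F) ≤ p ↔
      (X none ∈ p ∧ srIdeal K Δ ≤ p.comap (rename some)) ∨
        facePrime K F ≤ p.comap (rename some) := by
  rw [srIdeal_le_iff_exists_facePrime_le (isLowerSet_coneUnion hΔ F),
    srIdeal_le_iff_exists_facePrime_le hΔ, ← facePrime_insert_none_map_some_le_iff]
  constructor
  · rintro ⟨_, ⟨G, hG, rfl⟩ | hGF, hGp⟩
    · obtain ⟨hnone, hGp⟩ := facePrime_map_some_le_iff.mp hGp
      exact .inl ⟨hnone, G, hG, hGp⟩
    · exact .inr ((facePrime_le_facePrime_iff.mpr hGF).trans hGp)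
  · rintro (⟨hnone, G, hG, hGp⟩ | hFp)
    · exact ⟨_, .inl ⟨G, hG, rfl⟩, facePrime_map_some_le_iff.mpr ⟨hnone, hGp⟩⟩
    · exact ⟨_, insert_none_map_some_mem_coneUnion Δ F, hFp⟩

theorem radical_srIdeal_coneUnion [Finite V] (hΔ : IsLowerSet Δ) {w : V} (hw : w ∉ F) {ι : Type*}
    {a : ι → MvPolynomial V K} (ha : (Ideal.span (Set.range a)).radical = (srIdeal K Δ).radical) :
    (srIdeal K (coneUnion Δ F)).radical =
      (Ideal.span (insert (X none) (Set.range fun i => rename some (a i))) ⊓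
        Ideal.span (insert (X (some w))
          (Set.range fun v : {v // v ∉ insert w F} => X (some (v : V))))).radical := by
  refine radical_eq_radical_iff_forall_isPrime.mpr fun p hp => ?_
  have hprime : (p.comap (rename (R := K) some)).IsPrime := Ideal.comap_isPrime _ _
  rw [srIdeal_coneUnion_le_iff hΔ, hp.inf_le, span_insert_range_le_iff, span_insert_range_le_iff,
    ← radical_eq_radical_iff_forall_isPrime.mp ha _ hprime, span_range_le_iff, facePrime_le_iff]
  refine or_congr Iff.rfl ⟨fun h => ?_, fun ⟨hwp, h⟩ v hv => ?_⟩
  · have X_mem : ∀ v ∉ F, X (some v) ∈ p := fun v hv => by simpa using h v hv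
    exact ⟨X_mem w hw, fun v => X_mem v fun hv => v.2 (Finset.mem_insert_of_mem hv)⟩
  · rw [Ideal.mem_comap, rename_X]
    rcases eq_or_ne v w with rfl | hvw
    · exact hwp
    · exact h ⟨v, by simp [hvw, hv]⟩

variable [Fintype V]

theorem ara_srIdeal_coneUnion_le (hΔ : IsLowerSet Δ) {w : V} (hw : w ∉ F) (hwF : insert w F ∈ Δ)
    (hara : ara (srIdeal K Δ) = (insert w F)ᶜ.card) :
    ara (srIdeal K (coneUnion Δ F)) ≤ ara (srIdeal K Δ) + 1 := by
  have card_eq : Fintype.card {v // v ∉ insert w F} = ara (srIdeal K Δ) := by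
    rw [hara, card_notMem]
  obtain ⟨a, ha⟩ := exists_radical_span_range_eq card_eq
  have a_mem : ∀ i, a i ∈ facePrime K (insert w F) := span_range_le_iff.mp <|
    (radical_eq_radical_iff_forall_isPrime.mp ha _ inferInstance).mpr (srIdeal_le_facePrime hΔ hwF)
  rw [ara_eq_of_radical_eq (radical_srIdeal_coneUnion hΔ hw ha), ← card_eq]
  refine ara_inf_le_card_add_one _ _ fun i => ?_
  have facePrime_le : facePrime K (insert w F) ≤ (Ideal.span (Set.range
      fun v : {v // v ∉ insert w F} => X (some (v : V)))).comap (rename some) :=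
    facePrime_le_iff.mpr fun v hv => by
      rw [Ideal.mem_comap, rename_X]
      exact Ideal.subset_span ⟨⟨v, hv⟩, rfl⟩
  exact facePrime_le (a_mem i)

theorem idealHeight_srIdeal_coneUnion (hΔ : IsLowerSet Δ) (hmax : ∀ G ∈ Δ, G.card ≤ F.card + 1) :
    idealHeight (srIdeal K (coneUnion Δ F)) = Fᶜ.card := by
  have card_cone : (insert none (F.map .some) : Finset (Option V)).card = F.card + 1 := by simp
  rw [idealHeight_srIdeal (isLowerSet_coneUnion hΔ F) (insert_none_map_some_mem_coneUnion Δ F),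
    Finset.card_compl, Finset.card_compl, card_cone, Fintype.card_option, Nat.add_sub_add_right]
  rintro _ (⟨G, hG, rfl⟩ | hGF)
  · rw [card_cone, Finset.card_map]
    exact hmax G hG
  · exact Finset.card_le_card hGF

end ConeUnion

theorem stci_coneUnion_subfacet_general {V : Type*} [Finite V] [DecidableEq V]
    (K : Type*) [Field K]
    (Δ : Set (Finset V)) (hΔ : IsSimplicialComplex Δ)
    (hstci : IsSetTheoreticCI (srIdeal K Δ))
    (F : Finset V) (hF : IsSubfacet Δ F) :
    IsSetTheoreticCI (srIdeal K (coneUnion Δ F)) := by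
  have := Fintype.ofFinite V
  have hlower := hΔ.isLowerSet
  refine isSetTheoreticCI_of_ara_le (srIdeal_ne_top (isLowerSet_coneUnion hlower F)
    (insert_none_map_some_mem_coneUnion Δ F)) ?_
  rcases isEmpty_or_nonempty V with _ | _
  · simp [coneUnion_eq_univ_of_isEmpty, srIdeal_univ, ara_bot]
  obtain ⟨w, hw, hwF⟩ := hF.exists_insert_mem hΔ hstci
  have hmax : ∀ G ∈ Δ, G.card ≤ F.card + 1 := fun G hG =>
    hF.2 ▸ (isGreatest_scDim_add_one hΔ).2 ⟨G, hG, rfl⟩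
  have hcard : (insert w F).card = F.card + 1 := Finset.card_insert_of_notMem hw
  have hara : ara (srIdeal K Δ) = (insert w F)ᶜ.card := by
    exact_mod_cast hstci.trans (idealHeight_srIdeal hlower hwF (hcard ▸ hmax))
  have codim_eq : (insert w F)ᶜ.card + 1 = Fᶜ.card := by
    rw [Finset.compl_insert, Finset.card_erase_add_one (Finset.mem_compl.mpr hw)]
  rw [idealHeight_srIdeal_coneUnion hlower hmax, ← codim_eq, ← hara]
  exact_mod_cast ara_srIdeal_coneUnion_le hlower hw hwF hara

/-- for `K` algebraically closed, if `I_Δ` is a set-theoretic complete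
intersection and `F` is a subfacet of `Δ`, then `I_{Δ'}` is also a set-theoretic
complete intersection, where `Δ' = Δ ∪ co_{x₀}F`. -/
theorem stci_coneUnion_subfacet {V : Type*} [Fintype V] [DecidableEq V]
    (K : Type*) [Field K] [IsAlgClosed K]
    (Δ : Set (Finset V)) (hΔ : IsSimplicialComplex Δ)
    (hstci : (ara (srIdeal K Δ) : ℕ∞) = idealHeight (srIdeal K Δ))
    (F : Finset V) (hF : IsSubfacet Δ F) :
    (ara (srIdeal K (coneUnion Δ F)) : ℕ∞) = idealHeight (srIdeal K (coneUnion Δ F)) :=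
  stci_coneUnion_subfacet_general K Δ hΔ hstci F hF
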